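/- arXiv:1407.0615 — 2 statements merged into one kernel-verified Lean document; each statement's English description precedes it below -/
import Mathlib

section
/- Let ν be a real number with ν ≥ 1, and let 0 < a < b be two consecutive positive zeroes of J_ν (i.e. J_ν(a) = J_ν(b) = 0 and J_ν(z) ≠ 0 for all z with a < z < b). Then there exists exactly one z in the open interval (a, b) with J_{ν−1}(z) − J_ν(z) = 0. Conversely, if 0 < a < b are two consecutive positive zeroes of z ↦ J_{ν−1}(z) − J_ν(z), then there exists exactly one z in (a, b) with J_ν(z) = 0. -/
/-- Bessel function of the first kind of real order `ν`, defined via its power series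
`J_ν(z) = ∑ₘ (−1)^m / (m! Γ(ν+m+1)) (z/2)^(ν+2m)` (with real-exponent powers). -/
noncomputable def besselJ (ν z : ℝ) : ℝ :=
  ∑' m : ℕ, ((-1 : ℝ) ^ m / (Nat.factorial m * Real.Gamma (ν + m + 1))) *
    (z / 2) ^ (ν + 2 * (m : ℝ))

/-- `x` (indexed by `k ≥ 1`) enumerates the positive zeroes of `f`: it is strictly
increasing on indices `k ≥ 1`, each `x k` is a positive zero of `f`, and every positive
zero of `f` is some `x k`. -/
def EnumPosZeros (f : ℝ → ℝ) (x : ℕ → ℝ) : Prop :=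
  StrictMonoOn x (Set.Ici 1) ∧ (∀ k, 1 ≤ k → 0 < x k ∧ f (x k) = 0) ∧
    ∀ z : ℝ, 0 < z → f z = 0 → ∃ k, 1 ≤ k ∧ x k = z

noncomputable def bC (c : ℝ) (m : ℕ) : ℝ := (-1 : ℝ) ^ m / (Nat.factorial m * Real.Gamma (c + m + 1))

noncomputable def bF (c w : ℝ) : ℝ := ∑' m : ℕ, bC c m * w ^ m

theorem gamma_lb (c : ℝ) (hc : 0 ≤ c) (m : ℕ) : Real.Gamma (c + 1) ≤ Real.Gamma (c + m + 1) := by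
  induction m with
  | zero => simp
  | succ k ih =>
    have hk : (0:ℝ) ≤ k := Nat.cast_nonneg k
    have h1 : Real.Gamma (c + (k + 1 : ℕ) + 1) = (c + k + 1) * Real.Gamma (c + k + 1) := by
      rw [← Real.Gamma_add_one (by positivity)]
      push_cast
      ring_nf
    rw [h1]
    have := Real.Gamma_pos_of_pos (show 0 < c + k + 1 by positivity)
    nlinarith [mul_nonneg (add_nonneg hc hk) this.le]

theorem bC_bound (c : ℝ) (hc : 0 ≤ c) (m : ℕ) :
    |bC c m| ≤ (Real.Gamma (c + 1))⁻¹ * (1 / (Nat.factorial m : ℝ)) := by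
  have h0 := Real.Gamma_pos_of_pos (show 0 < c + 1 by positivity)
  have h1 := gamma_lb c hc m
  have h2 : (0:ℝ) < Nat.factorial m := by positivity
  unfold bC
  rw [abs_div, abs_pow, abs_neg, abs_one, one_pow, abs_of_pos (mul_pos h2 (h0.trans_le h1)),
    ← one_div, div_mul_div_comm, one_mul]
  apply one_div_le_one_div_of_le (by positivity)
  nlinarith

theorem bF_summable (c : ℝ) (hc : 0 ≤ c) (w : ℝ) : Summable (fun m : ℕ => bC c m * w ^ m) := by
  have h := (Real.summable_pow_div_factorial |w|).mul_left (Real.Gamma (c + 1))⁻¹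
  refine Summable.of_norm_bounded h (fun m => ?_)
  rw [Real.norm_eq_abs, abs_mul, abs_pow]
  have := mul_le_mul_of_nonneg_right (bC_bound c hc m) (pow_nonneg (abs_nonneg w) m)
  refine this.trans (le_of_eq ?_)
  ring

theorem bC_succ (c : ℝ) (m : ℕ) : bC c (m + 1) * ((m + 1 : ℕ) : ℝ) = - bC (c + 1) m := by
  unfold bC
  have h2 : (Nat.factorial m : ℝ) ≠ 0 := by positivity
  have h3 : ((m : ℝ) + 1) ≠ 0 := by positivity
  have e : c + ((m + 1 : ℕ) : ℝ) + 1 = c + 1 + m + 1 := by push_cast; ring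
  rw [e, Nat.factorial_succ]
  push_cast
  rw [div_mul_eq_mul_div, mul_assoc, mul_comm _ ((m:ℝ)+1), pow_succ, mul_comm ((m:ℝ)+1) _,
    mul_comm ((m:ℝ)+1) _, mul_div_mul_right _ _ h3]
  ring

theorem bF_deriv (c : ℝ) (hc : 0 ≤ c) (w : ℝ) : HasDerivAt (bF c) (- bF (c + 1) w) w := by
  set R := |w| + 1 with hR
  have hR0 : 0 ≤ R := by positivity
  have hu : Summable (fun m : ℕ => (Real.Gamma (c + 1))⁻¹ * ((m : ℝ) / (Nat.factorial m : ℝ) * R ^ (m - 1))) := by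
    apply Summable.mul_left
    rw [← summable_nat_add_iff 1]
    refine (Real.summable_pow_div_factorial R).congr (fun m => ?_)
    have h3 : ((m : ℝ) + 1) ≠ 0 := by positivity
    rw [Nat.factorial_succ]
    push_cast
    field_simp
  have key := hasDerivAt_tsum_of_isPreconnected (g := fun (m : ℕ) (y : ℝ) => bC c m * y ^ m)
    (g' := fun (m : ℕ) (y : ℝ) => bC c m * (m * y ^ (m - 1))) (t := Metric.ball (0:ℝ) R)
    (y₀ := 0) (y := w) hu Metric.isOpen_ball (convex_ball _ _).isPreconnected
    (fun m y _ => (hasDerivAt_pow m y).const_mul _)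
    (fun m y hy => by
      have hy' : |y| ≤ R := by
        have := Metric.mem_ball.1 hy
        rw [Real.dist_eq, sub_zero] at this
        exact this.le
      rw [Real.norm_eq_abs, abs_mul, abs_mul, abs_pow, Nat.abs_cast]
      calc _ ≤ ((Real.Gamma (c + 1))⁻¹ * (1 / (Nat.factorial m : ℝ))) * (m * R ^ (m - 1)) := by
            gcongr
            exact bC_bound c hc m
        _ = _ := by ring)
    (by simp [hR]; positivity) (bF_summable c hc 0)
    (by rw [Metric.mem_ball, Real.dist_eq, sub_zero]; linarith)
  have e : (∑' m : ℕ, bC c m * (m * w ^ (m - 1))) = - bF (c + 1) w := by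
    have hs := bF_summable (c + 1) (by positivity) w
    have h1 : HasSum (fun m : ℕ => bC c (m + 1) * (((m + 1 : ℕ) : ℝ) * w ^ (m + 1 - 1))) (- bF (c + 1) w) := by
      refine hs.hasSum.neg.congr_fun ?_
      intro m
      rw [← mul_assoc, bC_succ, Nat.add_sub_cancel]
      ring
    have h2 := (hasSum_nat_add_iff (f := fun m : ℕ => bC c m * ((m : ℝ) * w ^ (m - 1))) 1).1 h1
    simpa using h2.tsum_eq
  rw [← e]
  exact key

theorem bC_rec (c : ℝ) (hc : 0 ≤ c) (m : ℕ) : bC c m = (c + 1 + m) * bC (c + 1) m := by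
  unfold bC
  have h : c + 1 + m + 1 = (c + m + 1) + 1 := by ring
  have h0 : (0:ℝ) < c + m + 1 := by positivity
  have h1 := Real.Gamma_pos_of_pos h0
  rw [h, Real.Gamma_add_one h0.ne']
  have h2 : (Nat.factorial m : ℝ) ≠ 0 := by positivity
  field_simp
  ring

theorem bF_rec (c : ℝ) (hc : 0 ≤ c) (w : ℝ) :
    bF c w = (c + 1) * bF (c + 1) w - w * bF (c + 1 + 1) w := by
  have hs0 := (bF_summable c hc w).hasSum
  have hs1 := (bF_summable (c + 1) (by positivity) w).hasSum
  have hs2 := (bF_summable (c + 1 + 1) (by positivity) w).hasSum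
  have h3 : HasSum (fun m : ℕ => (m : ℝ) * bC (c + 1) m * w ^ m) (- w * bF (c + 1 + 1) w) := by
    rw [← hasSum_nat_add_iff' 1]
    have h := hs2.mul_left (-w)
    simp only [Finset.range_one, Finset.sum_singleton, Nat.cast_zero, zero_mul, sub_zero]
    refine h.congr_fun ?_
    intro m
    rw [mul_comm (((m + 1 : ℕ) : ℝ)) _, bC_succ]
    ring
  have h4 := (hs1.mul_left (c + 1)).add h3
  have h5 := hs0.unique (h4.congr_fun (fun m => by rw [bC_rec c hc m]; ring))
  unfold bF at *
  rw [h5]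
  ring

noncomputable def bA (c z : ℝ) : ℝ := (z / 2) ^ c * bF c (z ^ 2 / 4)

theorem besselJ_eq (c z : ℝ) (hc : 0 ≤ c) (hz : 0 ≤ z) : besselJ c z = bA c z := by
  unfold besselJ bA bF
  rw [← tsum_mul_left]
  apply tsum_congr
  intro m
  rw [Real.rpow_add_of_nonneg (by positivity) hc (by positivity), Real.rpow_mul (by positivity)]
  norm_num [bC]
  rw [div_pow]
  norm_num
  ring

theorem bA_cont (c : ℝ) (hc : 0 ≤ c) : Continuous (bA c) := by
  unfold bA
  have h1 : Continuous (bF c) :=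
    continuous_iff_continuousAt.2 (fun w => (bF_deriv c hc w).continuousAt)
  have h2 : Continuous (fun z : ℝ => (z / 2) ^ c) :=
    (continuous_id.div_const 2).rpow_const (fun _ => Or.inr hc)
  exact h2.mul (h1.comp (by fun_prop))

theorem bA_deriv0 (c z : ℝ) (hc : 0 ≤ c) (hz : 0 < z) :
    HasDerivAt (bA c) (c / z * bA c z - bA (c + 1) z) z := by
  have h1 : HasDerivAt (fun z : ℝ => z / 2) (1 / 2) z := (hasDerivAt_id z).div_const 2
  have h2 := h1.rpow_const (p := c) (Or.inl (by positivity))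
  have h3 : HasDerivAt (fun z : ℝ => z ^ 2 / 4) (z / 2) z := by
    refine ((hasDerivAt_pow 2 z).div_const 4).congr_deriv ?_
    norm_num
    ring
  have h4 := (bF_deriv c hc (z ^ 2 / 4)).comp z h3
  have h5 := h2.mul h4
  refine h5.congr_deriv ?_
  have hz2 : 0 < z / 2 := by positivity
  have e1 : (z / 2) ^ (c - 1) = (z / 2) ^ c / (z / 2) := by
    rw [Real.rpow_sub hz2, Real.rpow_one]
  unfold bA
  simp only [Function.comp]
  rw [e1, Real.rpow_add hz2, Real.rpow_one]
  field_simp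
  ring

theorem bA_deriv1 (c z : ℝ) (hc : 0 ≤ c) (hz : 0 < z) :
    HasDerivAt (bA (c + 1)) (bA c z - (c + 1) / z * bA (c + 1) z) z := by
  refine (bA_deriv0 (c + 1) z (by positivity) hz).congr_deriv ?_
  have hz2 : 0 < z / 2 := by positivity
  unfold bA
  rw [bF_rec c hc, Real.rpow_add hz2, Real.rpow_add hz2, Real.rpow_add hz2, Real.rpow_one]
  field_simp
  ring

noncomputable def bG (c z : ℝ) : ℝ :=
  z ^ 2 * (bA c z ^ 2 + bA (c + 1) z ^ 2) - (2 * c + 1) * z * bA c z * bA (c + 1) z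

theorem bG_deriv (c z : ℝ) (hc : 0 ≤ c) (hz : 0 < z) :
    HasDerivAt (bG c) (z * (bA c z ^ 2 + bA (c + 1) z ^ 2)) z := by
  have h0 := bA_deriv0 c z hc hz
  have h1 := bA_deriv1 c z hc hz
  have hi := hasDerivAt_id z
  have h := ((hi.pow 2).mul ((h0.pow 2).add (h1.pow 2))).sub
    (((hi.const_mul (2 * c + 1)).mul h0).mul h1)
  refine h.congr_deriv ?_
  simp
  field_simp
  ring

theorem bG_cont (c : ℝ) (hc : 0 ≤ c) : Continuous (bG c) := by
  have h0 := bA_cont c hc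
  have h1 := bA_cont (c + 1) (by positivity)
  unfold bG
  fun_prop

theorem bF_zero_pos (c : ℝ) (hc : 0 ≤ c) : 0 < bF c 0 := by
  have : bF c 0 = bC c 0 := by
    unfold bF
    rw [tsum_eq_single 0]
    · simp
    · intro m hm
      simp [hm]
  rw [this]
  have := Real.Gamma_pos_of_pos (show 0 < c + 1 by positivity)
  simp [bC, this]

theorem bG_pos (c z : ℝ) (hc : 0 ≤ c) (hz : 0 < z) : 0 < bG c z := by
  have h1 : Continuous (bF c) :=
    continuous_iff_continuousAt.2 (fun w => (bF_deriv c hc w).continuousAt)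
  have h2 : Continuous (fun z : ℝ => bF c (z ^ 2 / 4)) := h1.comp (by fun_prop)
  have h3 : ∀ᶠ x in nhds (0:ℝ), 0 < bF c (x ^ 2 / 4) := by
    apply h2.continuousAt.eventually (lt_mem_nhds _)
    simpa using bF_zero_pos c hc
  obtain ⟨δ, hδ, H⟩ := Metric.eventually_nhds_iff.1 h3
  set d := min (δ / 2) z with hd
  have hd0 : 0 < d := lt_min (by positivity) hz
  have hdδ : d < δ := (min_le_left _ _).trans_lt (by linarith)
  have hsm : StrictMonoOn (bG c) (Set.Icc 0 d) := by
    apply strictMonoOn_of_deriv_pos (convex_Icc _ _) (bG_cont c hc).continuousOn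
    intro x hx
    rw [interior_Icc] at hx
    rw [(bG_deriv c x hc hx.1).deriv]
    have hA : 0 < bA c x := by
      refine mul_pos (Real.rpow_pos_of_pos (by linarith [hx.1]) _) (H ?_)
      rw [Real.dist_eq, sub_zero, abs_of_pos hx.1]
      linarith [hx.2]
    have := hx.1
    positivity
  have hm : MonotoneOn (bG c) (Set.Ici 0) := by
    apply monotoneOn_of_deriv_nonneg (convex_Ici _) (bG_cont c hc).continuousOn
    · intro x hx
      rw [interior_Ici] at hx
      exact (bG_deriv c x hc hx).differentiableAt.differentiableWithinAt
    · intro x hx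
      rw [interior_Ici] at hx
      have hx' : 0 < x := hx
      rw [(bG_deriv c x hc hx).deriv]
      positivity
  have e0 : bG c 0 = 0 := by simp [bG]
  have := hsm (Set.left_mem_Icc.2 hd0.le) (Set.right_mem_Icc.2 hd0.le) hd0
  have := hm (Set.mem_Ici.2 hd0.le) (Set.mem_Ici.2 hz.le) (min_le_right _ _)
  linarith

theorem rolle_quot (f h f' h' : ℝ → ℝ) (a b : ℝ) (hab : a < b)
    (hf : ∀ z ∈ Set.Icc a b, HasDerivAt f (f' z) z) (hh : ∀ z ∈ Set.Icc a b, HasDerivAt h (h' z) z)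
    (hW : ∀ z ∈ Set.Icc a b, f' z * h z - f z * h' z ≠ 0)
    (fa : f a = 0) (fb : f b = 0) (hne : ∀ z ∈ Set.Ioo a b, h z ≠ 0) : False := by
  have hne' : ∀ z ∈ Set.Icc a b, h z ≠ 0 := by
    intro z hz h0
    rcases eq_or_lt_of_le hz.1 with h1 | h1
    · subst h1
      exact hW a hz (by rw [h0, fa]; ring)
    rcases eq_or_lt_of_le hz.2 with h2 | h2
    · subst h2
      exact hW z hz (by rw [h0, fb]; ring)
    exact hne z ⟨h1, h2⟩ h0
  have hd : ∀ z ∈ Set.Icc a b, HasDerivAt (fun x => f x / h x)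
      ((f' z * h z - f z * h' z) / h z ^ 2) z :=
    fun z hz => (hf z hz).div (hh z hz) (hne' z hz)
  obtain ⟨x, hx, h0⟩ := exists_hasDerivAt_eq_zero hab
    (fun z hz => (hd z hz).continuousAt.continuousWithinAt) (by simp [fa, fb])
    (fun z hz => hd z (Set.Ioo_subset_Icc_self hz))
  have hx' := Set.Ioo_subset_Icc_self hx
  exact div_ne_zero (hW x hx') (pow_ne_zero 2 (hne' x hx')) h0

theorem interlace (f h f' h' : ℝ → ℝ)
    (hf : ∀ z, 0 < z → HasDerivAt f (f' z) z) (hh : ∀ z, 0 < z → HasDerivAt h (h' z) z)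
    (hW : ∀ z, 0 < z → f' z * h z - f z * h' z ≠ 0) (a b : ℝ) (ha : 0 < a) (hab : a < b)
    (fa : f a = 0) (fb : f b = 0) (hne : ∀ z, a < z → z < b → f z ≠ 0) :
    ∃! z : ℝ, z ∈ Set.Ioo a b ∧ h z = 0 := by
  have ex : ∃ z, z ∈ Set.Ioo a b ∧ h z = 0 := by
    by_contra hcon
    refine rolle_quot f h f' h' a b hab (fun z hz => hf z (ha.trans_le hz.1))
      (fun z hz => hh z (ha.trans_le hz.1)) (fun z hz => hW z (ha.trans_le hz.1)) fa fb ?_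
    intro z hz h0
    exact hcon ⟨z, hz, h0⟩
  have aux : ∀ x y, x ∈ Set.Ioo a b → y ∈ Set.Ioo a b → h x = 0 → h y = 0 → x < y → False := by
    intro x y hx hy hx0 hy0 hxy
    have hp : 0 < x := ha.trans hx.1
    refine rolle_quot h f h' f' x y hxy (fun z hz => hh z (hp.trans_le hz.1))
      (fun z hz => hf z (hp.trans_le hz.1)) ?_ hx0 hy0
      (fun z hz => hne z (hx.1.trans hz.1) (hz.2.trans hy.2))
    intro z hz h0
    exact hW z (hp.trans_le hz.1) (by linarith)
  obtain ⟨z, hz, hz0⟩ := ex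
  refine ⟨z, ⟨hz, hz0⟩, ?_⟩
  rintro y ⟨hy, hy0⟩
  rcases lt_trichotomy y z with h1 | h1 | h1
  · exact (aux y z hy hz hy0 hz0 h1).elim
  · exact h1
  · exact (aux z y hz hy hz0 hy0 h1).elim

/-- For `ν ≥ 1`, between two consecutive positive zeroes of `J_ν` there is
exactly one zero of `J_{ν−1} − J_ν`, and conversely. -/
theorem stmt1 (ν : ℝ) (hν : 1 ≤ ν) :
    (∀ a b : ℝ, 0 < a → a < b → besselJ ν a = 0 → besselJ ν b = 0 →
      (∀ z : ℝ, a < z → z < b → besselJ ν z ≠ 0) →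
      ∃! z : ℝ, z ∈ Set.Ioo a b ∧ besselJ (ν - 1) z - besselJ ν z = 0) ∧
    (∀ a b : ℝ, 0 < a → a < b →
      besselJ (ν - 1) a - besselJ ν a = 0 → besselJ (ν - 1) b - besselJ ν b = 0 →
      (∀ z : ℝ, a < z → z < b → besselJ (ν - 1) z - besselJ ν z ≠ 0) →
      ∃! z : ℝ, z ∈ Set.Ioo a b ∧ besselJ ν z = 0) := by
  obtain ⟨c, rfl⟩ : ∃ c, ν = c + 1 := ⟨ν - 1, by ring⟩
  have hc : 0 ≤ c := by linarith
  rw [add_sub_cancel_right]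
  have ev : ∀ (d : ℝ), 0 ≤ d → ∀ z : ℝ, 0 < z → besselJ d =ᶠ[nhds z] bA d := by
    intro d hd z hz
    filter_upwards [lt_mem_nhds hz] with x hx
    exact besselJ_eq d x hd hx.le
  have hf : ∀ z, 0 < z → HasDerivAt (besselJ (c + 1)) (bA c z - (c + 1) / z * bA (c + 1) z) z :=
    fun z hz => (bA_deriv1 c z hc hz).congr_of_eventuallyEq (ev _ (by positivity) z hz)
  have hg : ∀ z, 0 < z → HasDerivAt (besselJ c) (c / z * bA c z - bA (c + 1) z) z :=
    fun z hz => (bA_deriv0 c z hc hz).congr_of_eventuallyEq (ev _ hc z hz)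
  have hh : ∀ z, 0 < z → HasDerivAt (fun z => besselJ c z - besselJ (c + 1) z)
      ((c / z * bA c z - bA (c + 1) z) - (bA c z - (c + 1) / z * bA (c + 1) z)) z :=
    fun z hz => (hg z hz).sub (hf z hz)
  have hW : ∀ z, 0 < z → (bA c z - (c + 1) / z * bA (c + 1) z) * (besselJ c z - besselJ (c + 1) z)
      - besselJ (c + 1) z *
      ((c / z * bA c z - bA (c + 1) z) - (bA c z - (c + 1) / z * bA (c + 1) z)) ≠ 0 := by
    intro z hz
    have h := bG_pos c z hc hz
    rw [besselJ_eq c z hc hz.le, besselJ_eq (c + 1) z (by positivity) hz.le]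
    have e : (bA c z - (c + 1) / z * bA (c + 1) z) * (bA c z - bA (c + 1) z)
      - bA (c + 1) z *
      ((c / z * bA c z - bA (c + 1) z) - (bA c z - (c + 1) / z * bA (c + 1) z))
      = bG c z / z ^ 2 := by
      unfold bG
      field_simp
      ring
    rw [e]
    positivity
  refine ⟨fun a b ha hab fa fb hne => ?_, fun a b ha hab fa fb hne => ?_⟩
  · exact interlace _ _ _ _ hf hh hW a b ha hab fa fb hne
  · refine interlace _ _ _ _ hh hf ?_ a b ha hab fa fb hne
    intro z hz h0
    exact hW z hz (by linarith)
end

section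
/- Let ν be a real number with ν ≥ 1, and let 0 < a < b be two consecutive positive zeroes of J_ν (i.e. J_ν(a) = J_ν(b) = 0 and J_ν(z) ≠ 0 for all z with a < z < b). Then there exists exactly one z in the open interval (a, b) with J_{ν−1}(z) + J_ν(z) = 0. Conversely, if 0 < a < b are two consecutive positive zeroes of z ↦ J_{ν−1}(z) + J_ν(z), then there exists exactly one z in (a, b) with J_ν(z) = 0. -/
open Set Filter Topology

noncomputable def auxC (ν : ℝ) (m : ℕ) : ℝ :=
  (-1 : ℝ) ^ m / (Nat.factorial m * Real.Gamma (ν + m + 1))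

noncomputable def auxH (ν x : ℝ) : ℝ := ∑' m : ℕ, auxC ν m * x ^ m

lemma aux_gamma_le (ν : ℝ) (hν : 0 ≤ ν) (m : ℕ) :
    Real.Gamma (ν + 1) ≤ Real.Gamma (ν + m + 1) := by
  induction m with
  | zero => simp
  | succ k ih =>
    refine ih.trans ?_
    have h : (0 : ℝ) < ν + k + 1 := by positivity
    have := Real.Gamma_add_one h.ne'
    have h2 := Real.Gamma_pos_of_pos h
    push_cast
    rw [← add_assoc, this]
    have hk : (0 : ℝ) ≤ k := by positivity
    nlinarith

lemma aux_norm (ν : ℝ) (hν : 0 ≤ ν) (m : ℕ) :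
    |auxC ν m| ≤ (Real.Gamma (ν + 1))⁻¹ * (1 / (Nat.factorial m : ℝ)) := by
  have h1 : 0 < Real.Gamma (ν + 1) := Real.Gamma_pos_of_pos (by positivity)
  have h2 := aux_gamma_le ν hν m
  have h3 : (0 : ℝ) < Nat.factorial m := by positivity
  have h4 := h1.trans_le h2
  unfold auxC
  rw [abs_div, abs_pow, abs_neg, abs_one, one_pow, abs_of_pos (by positivity), one_div, mul_inv,
    mul_comm, one_div]
  gcongr

lemma aux_summable (ν : ℝ) (hν : 0 ≤ ν) (x : ℝ) : Summable (fun m : ℕ => auxC ν m * x ^ m) := by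
  refine Summable.of_norm_bounded
    ((Real.summable_pow_div_factorial |x|).mul_left (Real.Gamma (ν + 1))⁻¹) ?_
  intro m
  rw [Real.norm_eq_abs, abs_mul, abs_pow]
  calc _ ≤ (Real.Gamma (ν + 1))⁻¹ * (1 / (Nat.factorial m : ℝ)) * |x| ^ m := by
        gcongr; exact aux_norm ν hν m
    _ = _ := by ring

lemma auxC_succ (ν : ℝ) (m : ℕ) : auxC ν (m + 1) * ((m + 1 : ℕ) : ℝ) = - auxC (ν + 1) m := by
  unfold auxC
  rw [Nat.factorial_succ]
  push_cast
  have e : ν + (m + 1) + 1 = ν + 1 + m + 1 := by ring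
  rw [e]
  have : (m : ℝ) + 1 ≠ 0 := by positivity
  have : (Nat.factorial m : ℝ) ≠ 0 := by positivity
  by_cases h : Real.Gamma (ν + 1 + m + 1) = 0
  · simp [h]
  field_simp
  ring

lemma auxH_deriv (ν : ℝ) (hν : 0 ≤ ν) (x : ℝ) : HasDerivAt (auxH ν) (- auxH (ν + 1) x) x := by
  set R : ℝ := |x| + 1
  have hR : 0 ≤ R := by positivity
  have hu : Summable (fun m : ℕ => |auxC ν m| * (m * R ^ (m - 1))) := by
    rw [← summable_nat_add_iff 1]
    have := (aux_summable (ν + 1) (by positivity) R).abs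
    refine this.congr ?_
    intro m
    have h := auxC_succ ν m
    have h2 : |auxC (ν + 1) m| = |auxC ν (m + 1)| * ((m + 1 : ℕ) : ℝ) := by
      rw [← abs_neg, ← h, abs_mul, abs_of_nonneg (by positivity : (0 : ℝ) ≤ ((m + 1 : ℕ) : ℝ))]
    rw [abs_mul, h2, abs_pow, abs_of_nonneg hR, Nat.add_sub_cancel]
    ring
  have key := hasDerivAt_tsum_of_isPreconnected (𝕜 := ℝ) (F := ℝ) (t := Ioo (-R) R) (y := x)
    (y₀ := 0) (g := fun m x => auxC ν m * x ^ m)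
    (g' := fun m x => auxC ν m * (m * x ^ (m - 1))) hu isOpen_Ioo isPreconnected_Ioo
    (fun m y _ => (hasDerivAt_pow m y).const_mul _)
    (by
      intro m y hy
      rw [Real.norm_eq_abs, abs_mul, abs_mul, abs_pow, Nat.abs_cast]
      have : |y| ≤ R := abs_le.2 ⟨hy.1.le, hy.2.le⟩
      gcongr)
    (by constructor <;> simp only [R] <;> linarith [abs_nonneg x])
    (aux_summable ν hν 0)
    (by constructor <;> simp only [R] <;> linarith [neg_abs_le x, le_abs_self x])
  have e : (∑' m : ℕ, auxC ν m * (m * x ^ (m - 1))) = - auxH (ν + 1) x := by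
    have hs : Summable (fun m : ℕ => auxC ν m * (m * x ^ (m - 1))) := by
      rw [← summable_nat_add_iff 1]
      refine (aux_summable (ν + 1) (by positivity) x).neg.congr ?_
      intro m
      rw [Nat.add_sub_cancel, ← mul_assoc, auxC_succ]
      ring
    rw [hs.tsum_eq_zero_add, auxH, ← tsum_neg]
    simp only [Nat.cast_zero, zero_mul, mul_zero, zero_add]
    congr 1
    ext m
    rw [Nat.add_sub_cancel, ← mul_assoc, auxC_succ]
    ring
  rw [← e]
  exact key

lemma auxH_rec (ν : ℝ) (hν : 1 ≤ ν) (x : ℝ) :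
    auxH (ν - 1) x = ν * auxH ν x - x * auxH (ν + 1) x := by
  have s1 := aux_summable (ν - 1) (by linarith) x
  have s2 := aux_summable ν (by linarith) x
  have s3 := aux_summable (ν + 1) (by linarith) x
  have hc : ∀ m : ℕ, auxC (ν - 1) m = (ν + m) * auxC ν m := by
    intro m
    unfold auxC
    have h : (0 : ℝ) < ν + m := by positivity
    rw [Real.Gamma_add_one h.ne', show ν - 1 + m + 1 = ν + m by ring]
    have := (Real.Gamma_pos_of_pos h).ne'
    have : (Nat.factorial m : ℝ) ≠ 0 := by positivity
    field_simp
  have e : x * auxH (ν + 1) x = ν * auxH ν x - auxH (ν - 1) x := by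
    unfold auxH
    have hs := (s2.mul_left ν).sub s1
    rw [← tsum_mul_left, ← tsum_mul_left, ← (s2.mul_left ν).tsum_sub s1, hs.tsum_eq_zero_add]
    rw [hc 0]
    simp only [Nat.cast_zero, pow_zero, add_zero, mul_one, sub_self, zero_add]
    congr 1
    ext m
    rw [hc (m + 1)]
    have := auxC_succ ν m
    push_cast at this ⊢
    linear_combination (x ^ (m + 1)) * this
  linarith

lemma bessel_eq (ν z : ℝ) (hz : 0 < z) : besselJ ν z = (z / 2) ^ ν * auxH ν ((z / 2) ^ 2) := by
  unfold besselJ auxH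
  rw [← tsum_mul_left]
  congr 1
  ext m
  rw [Real.rpow_add (by positivity), auxC]
  have : (z / 2) ^ (2 * (m : ℝ)) = ((z / 2) ^ 2) ^ m := by
    rw [← pow_mul, ← Real.rpow_natCast]; push_cast; rfl
  rw [this]; ring

lemma bessel_deriv0 (ν z : ℝ) (hν : 0 ≤ ν) (hz : 0 < z) :
    HasDerivAt (besselJ ν) (ν / z * besselJ ν z - besselJ (ν + 1) z) z := by
  have h0 : (0 : ℝ) < z / 2 := by positivity
  have d1 : HasDerivAt (fun z : ℝ => z / 2) (1 / 2) z := (hasDerivAt_id z).div_const 2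
  have d2 := d1.rpow_const (p := ν) (Or.inl h0.ne')
  have d3 := (auxH_deriv ν hν ((z / 2) ^ 2)).comp z (d1.pow 2)
  have d4 := d2.mul d3
  have ev : besselJ ν =ᶠ[𝓝 z] fun z => (z / 2) ^ ν * auxH ν ((z / 2) ^ 2) := by
    filter_upwards [lt_mem_nhds hz] with y hy using bessel_eq ν y hy
  refine HasDerivAt.congr_of_eventuallyEq ?_ ev
  refine d4.congr_deriv (Eq.symm ?_)
  rw [bessel_eq ν z hz, bessel_eq (ν + 1) z hz, Real.rpow_add h0, Real.rpow_sub h0, Real.rpow_one]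
  simp only [Function.comp, Pi.pow_apply]
  field_simp
  ring

lemma bessel_rec (ν z : ℝ) (hν : 1 ≤ ν) (hz : 0 < z) :
    besselJ (ν - 1) z + besselJ (ν + 1) z = 2 * ν / z * besselJ ν z := by
  have h0 : (0 : ℝ) < z / 2 := by positivity
  rw [bessel_eq ν z hz, bessel_eq (ν + 1) z hz, bessel_eq (ν - 1) z hz, auxH_rec ν hν,
    Real.rpow_add h0, Real.rpow_sub h0, Real.rpow_one]
  field_simp
  ring

lemma bessel_deriv1 (ν z : ℝ) (hν : 1 ≤ ν) (hz : 0 < z) :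
    HasDerivAt (besselJ ν) (besselJ (ν - 1) z - ν / z * besselJ ν z) z := by
  convert bessel_deriv0 ν z (by linarith) hz using 1
  linear_combination bessel_rec ν z hν hz

lemma bessel_deriv2 (ν z : ℝ) (hν : 1 ≤ ν) (hz : 0 < z) :
    HasDerivAt (besselJ (ν - 1)) ((ν - 1) / z * besselJ (ν - 1) z - besselJ ν z) z := by
  simpa using bessel_deriv0 (ν - 1) z (by linarith) hz

lemma bessel_pos (ν : ℝ) (hν : 0 ≤ ν) : ∀ᶠ z in 𝓝[>] (0 : ℝ), 0 < besselJ ν z := by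
  have hc : ContinuousAt (fun z : ℝ => auxH ν ((z / 2) ^ 2)) 0 := by
    have : Continuous (auxH ν) :=
      continuous_iff_continuousAt.2 fun x => (auxH_deriv ν hν x).continuousAt
    exact (this.comp (by fun_prop)).continuousAt
  have h0 : 0 < auxH ν (((0 : ℝ) / 2) ^ 2) := by
    unfold auxH
    rw [tsum_eq_single 0]
    · simp [auxC]
      exact Real.Gamma_pos_of_pos (by positivity)
    · intro m hm
      simp [hm]
  have := (hc.eventually (lt_mem_nhds h0)).filter_mono (nhdsWithin_le_nhds (s := Ioi 0))
  filter_upwards [this, self_mem_nhdsWithin] with z h1 h2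
  have h2 : 0 < z := h2
  rw [bessel_eq ν z h2]
  positivity

lemma bessel_nonvanish (ν z : ℝ) (hν : 1 ≤ ν) (hz : 0 < z) (h1 : besselJ ν z = 0) :
    besselJ (ν - 1) z ≠ 0 := by
  intro h2
  set F : ℝ → ℝ := fun y => y ^ (2 * ν) * (besselJ ν y ^ 2 + besselJ (ν - 1) y ^ 2) with hF
  have hd : ∀ y : ℝ, 0 < y → HasDerivAt F
      (y ^ (2 * ν) / y * ((4 * ν - 2) * besselJ (ν - 1) y ^ 2)) y := by
    intro y hy
    have a1 := (bessel_deriv1 ν y hν hy).pow 2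
    have a2 := (bessel_deriv2 ν y hν hy).pow 2
    have a3 := (hasDerivAt_id y).rpow_const (p := 2 * ν) (Or.inl hy.ne')
    refine (a3.mul (a1.add a2)).congr_deriv (Eq.symm ?_)
    simp only [id, Pi.pow_apply, Pi.add_apply]
    rw [Real.rpow_sub hy, Real.rpow_one]
    field_simp
    ring
  have hm : MonotoneOn F (Ioi 0) := by
    refine monotoneOn_of_deriv_nonneg (convex_Ioi 0)
      (fun y hy => (hd y hy).continuousAt.continuousWithinAt) ?_ ?_
    · intro y hy
      rw [interior_Ioi] at hy
      exact (hd y hy).differentiableAt.differentiableWithinAt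
    · intro y hy
      rw [interior_Ioi] at hy
      have hy : 0 < y := hy
      rw [(hd y hy).deriv]
      have : 0 ≤ 4 * ν - 2 := by linarith
      positivity
  have hlt : ∀ᶠ y in 𝓝[>] (0 : ℝ), y < z :=
    (gt_mem_nhds hz).filter_mono nhdsWithin_le_nhds
  obtain ⟨y, ⟨hy1, hy2⟩, hy3⟩ :=
    ((bessel_pos ν (by linarith)).and hlt |>.and self_mem_nhdsWithin).exists
  have hy3 : 0 < y := hy3
  have := hm (mem_Ioi.2 hy3) (mem_Ioi.2 hz) hy2.le
  have e : F z = 0 := by simp [hF, h1, h2]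
  have e2 : 0 < F y := by simp only [hF]; positivity
  linarith

lemma inter_pos {f f' g : ℝ → ℝ} {a b : ℝ} (hab : a < b)
    (hf : ∀ z ∈ Icc a b, HasDerivAt f (f' z) z)
    (hP : ∀ z ∈ Icc a b, f z = 0 → 0 < f' z * g z)
    (ha : f a = 0) (hb : f b = 0) (hg : ∀ z ∈ Icc a b, 0 < g z) : False := by
  have hP' : ∀ z ∈ Icc a b, f z = 0 → 0 < f' z := fun z hz h =>
    (pos_iff_pos_of_mul_pos (hP z hz h)).2 (hg z hz)
  have h1 := image_le_of_deriv_right_lt_deriv_boundary' (f := fun _ => 0) (f' := fun _ => 0)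
    (a := a) (b := b) (B := f) (B' := f') continuousOn_const
    (fun x _ => hasDerivWithinAt_const _ _ _) ha.ge
    (fun x hx => (hf x hx).continuousAt.continuousWithinAt)
    (fun x hx => (hf x (Ico_subset_Icc_self hx)).hasDerivWithinAt)
    (fun x hx h => hP' x (Ico_subset_Icc_self hx) h.symm)
  have hbm : b ∈ Icc a b := right_mem_Icc.2 hab.le
  have hd := (hf b hbm)
  have hpos := hP' b hbm hb
  have ht := (hasDerivAt_iff_tendsto_slope.1 hd).eventually (lt_mem_nhds hpos)
  have ht2 : ∀ᶠ y in 𝓝[<] b, 0 < slope f b y :=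
    ht.filter_mono (nhdsWithin_mono b (fun y (hy : y < b) => hy.ne))
  have ha' : ∀ᶠ y in 𝓝[<] b, a < y := (lt_mem_nhds hab).filter_mono nhdsWithin_le_nhds
  obtain ⟨y, ⟨hy1, hy2⟩, hy3⟩ := (ht2.and ha' |>.and self_mem_nhdsWithin).exists
  have hy3 : y < b := hy3
  have := h1 ⟨hy2.le, hy3.le⟩
  rw [slope_def_field, hb, sub_zero] at hy1
  have h5 := div_nonpos_of_nonneg_of_nonpos this (sub_nonpos.2 hy3.le)
  linarith

lemma inter {f f' g : ℝ → ℝ} {a b : ℝ} (hab : a < b)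
    (hf : ∀ z ∈ Icc a b, HasDerivAt f (f' z) z)
    (hP : ∀ z ∈ Icc a b, f z = 0 → 0 < f' z * g z) (hg : ContinuousOn g (Icc a b))
    (ha : f a = 0) (hb : f b = 0) : ∃ z ∈ Ioo a b, g z = 0 := by
  by_contra! hne
  have hA : a ∈ Icc a b := left_mem_Icc.2 hab.le
  have hB : b ∈ Icc a b := right_mem_Icc.2 hab.le
  have hne' : ∀ z ∈ Icc a b, g z ≠ 0 := by
    intro z hz h0
    rcases eq_or_lt_of_le hz.1 with h | h
    · have := hP a hA ha
      rw [h, h0] at this; simp at this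
    rcases eq_or_lt_of_le hz.2 with h' | h'
    · have := hP b hB hb
      rw [← h', h0] at this; simp at this
    exact hne z ⟨h, h'⟩ h0
  have hsame : ∀ x ∈ Icc a b, ∀ y ∈ Icc a b, 0 < g x → 0 < g y := by
    intro x hx y hy hgx
    by_contra! hgy
    obtain ⟨c, hc, hc0⟩ := isPreconnected_Icc.intermediate_value hy hx hg ⟨hgy, hgx.le⟩
    exact hne' c hc hc0
  by_cases hpos : 0 < g a
  · exact inter_pos hab hf hP ha hb fun z hz => hsame a hA z hz hpos
  · refine inter_pos (f := fun z => - f z) (f' := fun z => - f' z) (g := fun z => - g z) hab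
      (fun z hz => (hf z hz).neg) ?_ (by simp [ha]) (by simp [hb]) ?_
    · intro z hz h
      have := hP z hz (neg_eq_zero.1 h)
      simpa using this
    · intro z hz
      have h1 : ¬ 0 < g z := fun h => hpos (hsame z hz a hA h)
      have := lt_of_le_of_ne (not_lt.1 h1) (hne' z hz)
      simpa using this

lemma inter_unique {f f' g g' : ℝ → ℝ} 
    (hf : ∀ z, 0 < z → HasDerivAt f (f' z) z) (hg : ∀ z, 0 < z → HasDerivAt g (g' z) z)
    (hP : ∀ z, 0 < z → f z = 0 → 0 < f' z * g z)
    (hQ : ∀ z, 0 < z → g z = 0 → g' z * f z < 0) {a b : ℝ} (h0 : 0 < a) (hab : a < b)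
    (ha : f a = 0) (hb : f b = 0) (hne : ∀ z, a < z → z < b → f z ≠ 0) :
    ∃! z, z ∈ Ioo a b ∧ g z = 0 := by
  obtain ⟨z, hz, hz0⟩ := inter (f := f) (f' := f') (g := g) hab
    (fun z hz => hf z (h0.trans_le hz.1)) (fun z hz => hP z (h0.trans_le hz.1))
    (fun z hz => (hg z (h0.trans_le hz.1)).continuousAt.continuousWithinAt) ha hb
  have key : ∀ x ∈ Ioo a b, ∀ y ∈ Ioo a b, g x = 0 → g y = 0 → ¬ x < y := by
    intro x hx y hy hgx hgy hxy
    have hp : ∀ z ∈ Icc x y, 0 < z := fun z hz => (h0.trans hx.1).trans_le hz.1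
    obtain ⟨c, hc, hc0⟩ := inter (f := g) (f' := g') (g := fun z => - f z) hxy
      (fun z hz => hg z (hp z hz))
      (fun z hz h => by have := hQ z (hp z hz) h; linarith)
      (fun z hz => (hf z (hp z hz)).continuousAt.neg.continuousWithinAt) hgx hgy
    exact hne c (hx.1.trans hc.1) (hc.2.trans hy.2) (neg_eq_zero.1 hc0)
  refine ⟨z, ⟨hz, hz0⟩, ?_⟩
  rintro y ⟨hy, hy0⟩
  exact le_antisymm (not_lt.1 (key z hz y hy hz0 hy0)) (not_lt.1 (key y hy z hz hy0 hz0))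

/-- For `ν ≥ 1`, between two consecutive positive zeroes of `J_ν` there is
exactly one zero of `J_{ν−1} + J_ν`, and conversely. -/
theorem stmt9 (ν : ℝ) (hν : 1 ≤ ν) :
    (∀ a b : ℝ, 0 < a → a < b → besselJ ν a = 0 → besselJ ν b = 0 →
      (∀ z : ℝ, a < z → z < b → besselJ ν z ≠ 0) →
      ∃! z : ℝ, z ∈ Set.Ioo a b ∧ besselJ (ν - 1) z + besselJ ν z = 0) ∧
    (∀ a b : ℝ, 0 < a → a < b →
      besselJ (ν - 1) a + besselJ ν a = 0 → besselJ (ν - 1) b + besselJ ν b = 0 →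
      (∀ z : ℝ, a < z → z < b → besselJ (ν - 1) z + besselJ ν z ≠ 0) →
      ∃! z : ℝ, z ∈ Set.Ioo a b ∧ besselJ ν z = 0) := by
  have hu := fun z hz => bessel_deriv1 ν z hν hz
  have hw := fun z hz => (bessel_deriv2 ν z hν hz).add (bessel_deriv1 ν z hν hz)
  have P : ∀ z, 0 < z → besselJ ν z = 0 →
      0 < (besselJ (ν - 1) z - ν / z * besselJ ν z) * (besselJ (ν - 1) z + besselJ ν z) := by
    intro z hz h
    have := bessel_nonvanish ν z hν hz h
    rw [h, mul_zero, sub_zero, add_zero]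
    exact mul_self_pos.2 this
  have Q : ∀ z, 0 < z → besselJ (ν - 1) z + besselJ ν z = 0 →
      ((ν - 1) / z * besselJ (ν - 1) z - besselJ ν z +
        (besselJ (ν - 1) z - ν / z * besselJ ν z)) * besselJ ν z < 0 := by
    intro z hz h
    have h1 : besselJ (ν - 1) z = - besselJ ν z := by linarith
    have h2 : besselJ ν z ≠ 0 := by
      intro h2
      exact bessel_nonvanish ν z hν hz h2 (by rw [h1, h2, neg_zero])
    have h3 : 0 < (2 + (2 * ν - 1) / z) * besselJ ν z ^ 2 := by
      have : 0 < 2 * ν - 1 := by linarith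
      positivity
    have e : ((ν - 1) / z * besselJ (ν - 1) z - besselJ ν z +
        (besselJ (ν - 1) z - ν / z * besselJ ν z)) * besselJ ν z =
        - ((2 + (2 * ν - 1) / z) * besselJ ν z ^ 2) := by
      rw [h1]; ring
    rw [e]; linarith
  constructor
  · intro a b h0 hab ha hb hne
    exact inter_unique hu hw P Q h0 hab ha hb hne
  · intro a b h0 hab ha hb hne
    have := inter_unique (f := besselJ (ν - 1) + besselJ ν) (g := fun z => - besselJ ν z)
      hw (fun z hz => (hu z hz).neg)
      (fun z hz h => by have := Q z hz h; linarith)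
      (fun z hz h => by
        have := P z hz (neg_eq_zero.1 h)
        simp only [Pi.add_apply]
        linarith) h0 hab ha hb hne
    simpa only [neg_eq_zero] using this
end
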